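/- arXiv:1611.00265 — 4 statements merged into one kernel-verified Lean document; each statement's English description precedes it below -/
import Mathlib

section
/- Let X be an ∞-pseudo-metric space. Suppose that for every R, ε > 0 there exist an (ε,R)-continuous partition of unity φ on X and a constant M > 0 such that every stratum of φ admits an (ε,R)-continuous partition of unity (of that stratum) all of whose strata have diameter at most M. Then X is exact. -/
open scoped ENNReal

/-!
Multiply each `φ_s` by the partition of unity of its own stratum. The products `φ_s ψ_{s,t}` sum
to `1`, and the stratum of `φ_s ψ_{s,t}` is that of `ψ_{s,t}`, so the diameter bound is inherited.
Where `φ_s` is positive at both `x` and `y`,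
`φ_s(x) ψ_{s,t}(x) - φ_s(y) ψ_{s,t}(y)
  = φ_s(x) (ψ_{s,t}(x) - ψ_{s,t}(y)) + (φ_s(x) - φ_s(y)) ψ_{s,t}(y)`;
summing over `t` bounds the variation over the stratum of `φ_s` by `φ_s(x) ε₂ + |φ_s(x) - φ_s(y)|`,
which also holds if `φ_s` vanishes at `x` or `y`. Summing over `s` gives `ε₂ + ε₁`.
-/

variable {ι X : Type*}

/-- A partition of unity on `X` indexed by `ι`, with no continuity or local finiteness required.
The upper bounds `φ i x ≤ 1` follow from the two fields. -/
structure IsPartitionOfUnity (φ : ι → X → ℝ) : Prop where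
  nonneg (i : ι) (x : X) : 0 ≤ φ i x
  hasSum_one (x : X) : HasSum (φ · x) 1

/-- `(ε, R)`-continuity of a family of functions, seen as a map from `X` to `ℓ¹(ι)`. The `tsum` is
the `ℓ¹`-distance only for families summable at every point, such as partitions of unity. -/
def IsL1Continuous [PseudoEMetricSpace X] (φ : ι → X → ℝ) (ε : ℝ) (R : ℝ≥0∞) : Prop :=
  ∀ x y, edist x y ≤ R → ∑' i, |φ i x - φ i y| ≤ ε

open scoped Classical in
/-- The product of `f` with a function `g` defined only on the stratum of `f`, extended by zero. -/
noncomputable def mulOnStratum (f : X → ℝ) (g : {x // 0 < f x} → ℝ) (x : X) : ℝ :=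
  if hx : 0 < f x then f x * g ⟨x, hx⟩ else 0

/-- The refinement of a family `φ` by families `ψ i` on its strata; for partitions of unity it is
again one, indexed by pairs. -/
noncomputable def stratumRefinement {κ : ι → Type*} (φ : ι → X → ℝ)
    (ψ : ∀ i, κ i → {x // 0 < φ i x} → ℝ) (p : Σ i, κ i) : X → ℝ :=
  mulOnStratum (φ p.1) (ψ p.1 p.2)

theorem IsPartitionOfUnity.le_one {φ : ι → X → ℝ} (hφ : IsPartitionOfUnity φ) (i : ι) (x : X) :
    φ i x ≤ 1 :=
  le_hasSum (hφ.hasSum_one x) i fun j _ => hφ.nonneg j x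

theorem IsPartitionOfUnity.summable_abs_sub {φ : ι → X → ℝ} (hφ : IsPartitionOfUnity φ) (x y : X) :
    Summable fun i => |φ i x - φ i y| :=
  ((hφ.hasSum_one x).summable.sub (hφ.hasSum_one y).summable).abs

theorem IsL1Continuous.bound_nonneg [PseudoEMetricSpace X] {φ : ι → X → ℝ} {ε : ℝ} {R : ℝ≥0∞}
    (hφ : IsL1Continuous φ ε R) (x : X) : 0 ≤ ε :=
  (tsum_nonneg fun _ => abs_nonneg _).trans (hφ x x (by simp))

theorem tsum_abs_mul_sub_mul_le {u v : ι → ℝ} (hu : Summable u) (hv : Summable v) (a b : ℝ) :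
    ∑' i, |a * u i - b * v i| ≤ |a| * ∑' i, |u i - v i| + |a - b| * ∑' i, |v i| := by
  have termwise (i : ι) : |a * u i - b * v i| ≤ |a| * |u i - v i| + |a - b| * |v i| :=
    calc |a * u i - b * v i| = |a * (u i - v i) + (a - b) * v i| := by ring_nf
      _ ≤ |a * (u i - v i)| + |(a - b) * v i| := abs_add_le _ _
      _ = |a| * |u i - v i| + |a - b| * |v i| := by rw [abs_mul, abs_mul]
  have hdiff := (hu.sub hv).abs.mul_left |a|
  have htail := hv.abs.mul_left |a - b|
  calc ∑' i, |a * u i - b * v i|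
      ≤ ∑' i, (|a| * |u i - v i| + |a - b| * |v i|) :=
        ((hu.mul_left a).sub (hv.mul_left b)).abs.tsum_le_tsum termwise (hdiff.add htail)
    _ = |a| * ∑' i, |u i - v i| + |a - b| * ∑' i, |v i| := by
        rw [hdiff.tsum_add htail, tsum_mul_left, tsum_mul_left]

section mulOnStratum

variable {f : X → ℝ}

theorem mulOnStratum_of_pos (g : {x // 0 < f x} → ℝ) {x : X} (hx : 0 < f x) :
    mulOnStratum f g x = f x * g ⟨x, hx⟩ :=
  dif_pos hx

theorem mulOnStratum_of_eq_zero (g : {x // 0 < f x} → ℝ) {x : X} (hx : f x = 0) :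
    mulOnStratum f g x = 0 :=
  dif_neg hx.not_gt

theorem mulOnStratum_nonneg {g : {x // 0 < f x} → ℝ} (hg : ∀ z, 0 ≤ g z) (x : X) :
    0 ≤ mulOnStratum f g x := by
  unfold mulOnStratum
  split_ifs with hx
  · exact mul_nonneg hx.le (hg _)
  · exact le_rfl

theorem setOf_mulOnStratum_pos (g : {x // 0 < f x} → ℝ) :
    {x | 0 < mulOnStratum f g x} = Subtype.val '' {z | 0 < g z} := by
  ext x
  by_cases hx : 0 < f x <;> simp [mulOnStratum, hx]

theorem ediam_setOf_mulOnStratum_pos [PseudoEMetricSpace X] (g : {x // 0 < f x} → ℝ) :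
    Metric.ediam {x | 0 < mulOnStratum f g x} = Metric.ediam {z | 0 < g z} := by
  rw [setOf_mulOnStratum_pos]
  exact isometry_subtype_coe.ediam_image _

theorem IsPartitionOfUnity.hasSum_mulOnStratum {g : ι → {x // 0 < f x} → ℝ}
    (hg : IsPartitionOfUnity g) (hf : ∀ x, 0 ≤ f x) (x : X) :
    HasSum (fun i => mulOnStratum f (g i) x) (f x) := by
  rcases (hf x).eq_or_lt' with hx | hx
  · simpa only [mulOnStratum_of_eq_zero _ hx, hx] using hasSum_zero
  · simpa only [mulOnStratum_of_pos _ hx, mul_one] using (hg.hasSum_one ⟨x, hx⟩).mul_left (f x)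

theorem IsPartitionOfUnity.tsum_abs_mulOnStratum_sub_le [PseudoEMetricSpace X]
    {g : ι → {x // 0 < f x} → ℝ} {ε : ℝ} {R : ℝ≥0∞} (hg : IsPartitionOfUnity g)
    (hgc : IsL1Continuous g ε R) (hf : ∀ x, 0 ≤ f x) {x y : X} (hxy : edist x y ≤ R) :
    ∑' i, |mulOnStratum f (g i) x - mulOnStratum f (g i) y| ≤ f x * ε + |f x - f y| := by
  have tsum_abs (z : X) : ∑' i, |mulOnStratum f (g i) z| = |f z| := by
    simp only [abs_of_nonneg (mulOnStratum_nonneg (hg.nonneg _) z), abs_of_nonneg (hf z),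
      (hg.hasSum_mulOnStratum hf z).tsum_eq]
  rcases (hf x).eq_or_lt' with hx | hx
  · simp only [mulOnStratum_of_eq_zero _ hx, hx, zero_sub, abs_neg, tsum_abs, zero_mul, zero_add,
      le_refl]
  rcases (hf y).eq_or_lt' with hy | hy
  · simpa only [mulOnStratum_of_eq_zero _ hy, hy, sub_zero, tsum_abs, le_add_iff_nonneg_left]
      using mul_nonneg hx.le (hgc.bound_nonneg ⟨x, hx⟩)
  simp only [mulOnStratum_of_pos _ hx, mulOnStratum_of_pos _ hy]
  have sum_x := hg.hasSum_one ⟨x, hx⟩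
  have sum_y := hg.hasSum_one ⟨y, hy⟩
  calc ∑' i, |f x * g i ⟨x, hx⟩ - f y * g i ⟨y, hy⟩|
      ≤ |f x| * ∑' i, |g i ⟨x, hx⟩ - g i ⟨y, hy⟩| + |f x - f y| * ∑' i, |g i ⟨y, hy⟩| :=
        tsum_abs_mul_sub_mul_le sum_x.summable sum_y.summable _ _
    _ = f x * ∑' i, |g i ⟨x, hx⟩ - g i ⟨y, hy⟩| + |f x - f y| := by
        simp only [abs_of_pos hx, abs_of_nonneg (hg.nonneg _ _), sum_y.tsum_eq, mul_one]
    _ ≤ f x * ε + |f x - f y| := by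
        gcongr
        exact hgc ⟨x, hx⟩ ⟨y, hy⟩ hxy

end mulOnStratum

section stratumRefinement

variable {κ : ι → Type*} {φ : ι → X → ℝ} {ψ : ∀ i, κ i → {x // 0 < φ i x} → ℝ}

theorem isPartitionOfUnity_stratumRefinement (hφ : IsPartitionOfUnity φ)
    (hψ : ∀ i, IsPartitionOfUnity (ψ i)) : IsPartitionOfUnity (stratumRefinement φ ψ) where
  nonneg p := mulOnStratum_nonneg ((hψ p.1).nonneg p.2)
  hasSum_one x := by
    have sum_fiber (i : ι) := (hψ i).hasSum_mulOnStratum (hφ.nonneg i) x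
    refine (hφ.hasSum_one x).sigma_of_hasSum sum_fiber ?_
    refine (summable_sigma_of_nonneg fun p =>
      mulOnStratum_nonneg ((hψ p.1).nonneg p.2) x).2 ⟨fun i => (sum_fiber i).summable, ?_⟩
    exact (hφ.hasSum_one x).summable.congr fun i => (sum_fiber i).tsum_eq.symm

theorem isL1Continuous_stratumRefinement [PseudoEMetricSpace X] {ε₁ ε₂ : ℝ} {R : ℝ≥0∞}
    (hφ : IsPartitionOfUnity φ) (hφc : IsL1Continuous φ ε₁ R)
    (hψ : ∀ i, IsPartitionOfUnity (ψ i)) (hψc : ∀ i, IsL1Continuous (ψ i) ε₂ R) :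
    IsL1Continuous (stratumRefinement φ ψ) (ε₁ + ε₂) R := by
  intro x y hxy
  let θ := stratumRefinement φ ψ
  have summable_sub : Summable fun p => |θ p x - θ p y| :=
    (isPartitionOfUnity_stratumRefinement hφ hψ).summable_abs_sub x y
  have sum_bound : HasSum (fun i => φ i x * ε₂ + |φ i x - φ i y|)
      (1 * ε₂ + ∑' i, |φ i x - φ i y|) :=
    ((hφ.hasSum_one x).mul_right ε₂).add (hφ.summable_abs_sub x y).hasSum
  calc ∑' p, |θ p x - θ p y| = ∑' i, ∑' k, |θ ⟨i, k⟩ x - θ ⟨i, k⟩ y| := summable_sub.tsum_sigma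
    _ ≤ ∑' i, (φ i x * ε₂ + |φ i x - φ i y|) :=
        summable_sub.sigma.tsum_le_tsum
          (fun i => (hψ i).tsum_abs_mulOnStratum_sub_le (hψc i) (hφ.nonneg i) hxy)
          sum_bound.summable
    _ = ε₂ + ∑' i, |φ i x - φ i y| := by rw [sum_bound.tsum_eq, one_mul]
    _ ≤ ε₁ + ε₂ := by
        rw [add_comm ε₁]
        gcongr
        exact hφc x y hxy

end stratumRefinement

/-- Suppose that for every `R, ε > 0` there are an `(ε,R)`-continuous
partition of unity `φ` on the ∞-pseudo-metric space `X` and `M > 0` such that every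
stratum of `φ` admits an `(ε,R)`-continuous partition of unity all of whose strata have
diameter at most `M`. Then `X` is exact. -/
theorem stmt12 {X : Type} [PseudoEMetricSpace X]
    (h : ∀ R ε : ℝ, 0 < R → 0 < ε → ∃ (S : Type) (φ : S → X → ℝ) (M : ℝ), 0 < M ∧
      (∀ s x, 0 ≤ φ s x ∧ φ s x ≤ 1) ∧
      (∀ x, HasSum (fun s => φ s x) 1) ∧
      (∀ x y : X, edist x y ≤ ENNReal.ofReal R → (∑' s, |φ s x - φ s y|) ≤ ε) ∧
      (∀ s : S, ∃ (T : Type) (ψ : T → {x : X // 0 < φ s x} → ℝ),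
        (∀ t z, 0 ≤ ψ t z ∧ ψ t z ≤ 1) ∧
        (∀ z, HasSum (fun t => ψ t z) 1) ∧
        (∀ z w : {x : X // 0 < φ s x}, edist z w ≤ ENNReal.ofReal R →
          (∑' t, |ψ t z - ψ t w|) ≤ ε) ∧
        (∀ t, EMetric.diam {z : {x : X // 0 < φ s x} | 0 < ψ t z} ≤ ENNReal.ofReal M))) :
    ∀ R ε : ℝ, 0 < R → 0 < ε → ∃ (S : Type) (φ : S → X → ℝ),
      (∀ s x, 0 ≤ φ s x ∧ φ s x ≤ 1) ∧
      (∀ x, HasSum (fun s => φ s x) 1) ∧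
      (∀ x y : X, edist x y ≤ ENNReal.ofReal R → (∑' s, |φ s x - φ s y|) ≤ ε) ∧
      (∃ D : ℝ, 0 < D ∧ ∀ s, EMetric.diam {x | 0 < φ s x} ≤ ENNReal.ofReal D) := by
  intro R ε hR hε
  obtain ⟨S, φ, M, hM, hφ01, hφsum, hφcont, hstrata⟩ := h R (ε / 2) hR (half_pos hε)
  choose T ψ hψ01 hψsum hψcont hψdiam using hstrata
  have hφ : IsPartitionOfUnity φ := ⟨fun s x => (hφ01 s x).1, hφsum⟩
  have hψ (s : S) : IsPartitionOfUnity (ψ s) := ⟨fun t z => (hψ01 s t z).1, hψsum s⟩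
  have hθ := isPartitionOfUnity_stratumRefinement hφ hψ
  have hθcont := isL1Continuous_stratumRefinement hφ hφcont hψ hψcont
  rw [add_halves] at hθcont
  exact ⟨Σ s, T s, stratumRefinement φ ψ, fun p x => ⟨hθ.nonneg p x, hθ.le_one p x⟩,
    hθ.hasSum_one, hθcont, M, hM,
    fun p => (ediam_setOf_mulOnStratum_pos _).trans_le (hψdiam p.1 p.2)⟩
end

section
/- Let X be a pseudo-metric space and let S be a set whose cardinality is larger than the cardinality of X × ℕ. Suppose there exist functions α : (0,∞) → (0,∞) and M : (0,∞) × (0,∞) → (0,∞) such that for every bounded subset Z of X, every δ > 0, every K > 0, every subset A ⊆ Z, and every (α(δ),α(δ))-Lipschitz K-cobounded map f : A → Δ(S), the map f extends to a (δ,δ)-Lipschitz M(δ,K)-cobounded map g : Z → Δ(S) (so that all bounded subsets of X are exact uniformly). Then X is exact. -/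
/-!
Extending the empty map shows that all bounded subsets carry cobounded `(δ, δ)`-Lipschitz maps into
a simplex with constants independent of the subset, i.e. that they are uniformly exact. Exactness
is stable under fibering: given a bornologous map `p : X → Y` to an exact space, pull back a slowly
varying partition of unity `ψ` from `Y` and multiply each `ψ j ∘ p` by a partition of unity on the
`R`-neighbourhood of its stratum. If `x` and `y` are `R`-close and one of them lies in a stratum,
then both lie in that neighbourhood, so the products vary by at most the variation of `ψ` plus that
of the local partitions. For `p = dist · x₀ : X → ℝ` the neighbourhoods are bounded, and `ℝ` is
exact by means of tent functions.
-/

universe u v w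

section Partition

variable {T X Y : Type*}

/-- Partitions of unity in the purely set-theoretic sense of coarse geometry: a family of
nonnegative functions with pointwise sum `1`, equivalently a map from `X` to the simplex `Δ(T)`.
Neither continuity nor local finiteness is required. -/
structure IsPartitionOfUnity_s13 (φ : T → X → ℝ) : Prop where
  nonneg : ∀ t x, 0 ≤ φ t x
  hasSum : ∀ x, HasSum (fun t ↦ φ t x) 1

/-- `(ε, R)`-continuity of a family of functions, regarded as a map into `ℓ¹(T)`. -/
def IsEpsContinuous [PseudoMetricSpace X] (φ : T → X → ℝ) (ε R : ℝ) : Prop :=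
  ∀ x y, dist x y ≤ R → ∑' t, |φ t x - φ t y| ≤ ε

/-- The strata `φ t ⁻¹' (0, ∞)` of the family have diameter at most `D`. Stated through distances,
since `Metric.diam` is `0` on unbounded sets. -/
def StrataDiamLE [PseudoMetricSpace X] (φ : T → X → ℝ) (D : ℝ) : Prop :=
  ∀ t x y, 0 < φ t x → 0 < φ t y → dist x y ≤ D

namespace IsPartitionOfUnity_s13

variable {φ : T → X → ℝ}

theorem le_one_s13 (hφ : IsPartitionOfUnity_s13 φ) (t : T) (x : X) : φ t x ≤ 1 :=
  le_hasSum (hφ.hasSum x) t fun s _ ↦ hφ.nonneg s x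

theorem tsum_abs_eq_one (hφ : IsPartitionOfUnity_s13 φ) (x : X) : ∑' t, |φ t x| = 1 := by
  simp only [abs_of_nonneg (hφ.nonneg _ x), (hφ.hasSum x).tsum_eq]

theorem summable_abs_sub_s13 (hφ : IsPartitionOfUnity_s13 φ) (x y : X) :
    Summable fun t ↦ |φ t x - φ t y| :=
  ((hφ.hasSum x).summable.sub (hφ.hasSum y).summable).abs

theorem comp (hφ : IsPartitionOfUnity_s13 φ) (p : Y → X) :
    IsPartitionOfUnity_s13 fun t y ↦ φ t (p y) :=
  ⟨fun t y ↦ hφ.nonneg t (p y), fun y ↦ hφ.hasSum (p y)⟩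

end IsPartitionOfUnity_s13

theorem IsEpsContinuous.comp [PseudoMetricSpace X] [PseudoMetricSpace Y] {φ : T → X → ℝ}
    {ε R L : ℝ} (hφ : IsEpsContinuous φ ε L) {p : Y → X}
    (hp : ∀ x y, dist x y ≤ R → dist (p x) (p y) ≤ L) :
    IsEpsContinuous (fun t y ↦ φ t (p y)) ε R :=
  fun x y hxy ↦ hφ (p x) (p y) (hp x y hxy)

end Partition

section Exact

/-- Exactness of a pseudo-metric space: it has partitions of unity with uniformly bounded strata
that vary arbitrarily slowly at any prescribed scale. -/
def IsExactSpace (X : Type u) [PseudoMetricSpace X] : Prop :=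
  ∀ R ε : ℝ, 0 < R → 0 < ε → ∃ (T : Type v) (φ : T → X → ℝ),
    IsPartitionOfUnity_s13 φ ∧ IsEpsContinuous φ ε R ∧ ∃ D, StrataDiamLE φ D

/-- Uniform exactness of a family of subsets of a pseudo-metric space: every member is exact, with
a bound on the strata that depends on `R` and `ε` but not on the member. The index type of the
partition may depend on the member. -/
def IsUniformlyExact {X : Type u} [PseudoMetricSpace X] (𝒵 : Set (Set X)) : Prop :=
  ∀ R ε : ℝ, 0 < R → 0 < ε → ∃ D : ℝ, ∀ Z ∈ 𝒵, ∃ (T : Type v) (φ : T → Z → ℝ),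
    IsPartitionOfUnity_s13 φ ∧ IsEpsContinuous φ ε R ∧ StrataDiamLE φ D

variable {X : Type u} [PseudoMetricSpace X]

theorem isExactSpace_iff :
    IsExactSpace.{u, v} X ↔ ∀ R ε : ℝ, 0 < R → 0 < ε → ∃ (T : Type v) (φ : T → X → ℝ),
      (∀ t x, 0 ≤ φ t x ∧ φ t x ≤ 1) ∧
      (∀ x, HasSum (fun t ↦ φ t x) 1) ∧
      (∀ x y : X, dist x y ≤ R → (∑' t, |φ t x - φ t y|) ≤ ε) ∧
      (∃ D : ℝ, 0 < D ∧ ∀ t, ∀ x y : X, 0 < φ t x → 0 < φ t y → dist x y ≤ D) := by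
  refine forall₄_congr fun R ε _ _ ↦ exists₂_congr fun T φ ↦ ⟨?_, ?_⟩
  · rintro ⟨hφ, hcont, D, hD⟩
    exact ⟨fun t x ↦ ⟨hφ.nonneg t x, hφ.le_one_s13 t x⟩, hφ.hasSum, hcont, max D 1, by positivity,
      fun t x y hx hy ↦ (hD t x y hx hy).trans (le_max_left D 1)⟩
  · rintro ⟨hIcc, hsum, hcont, D, -, hD⟩
    exact ⟨⟨fun t x ↦ (hIcc t x).1, hsum⟩, hcont, D, hD⟩

theorem isExactSpace_of_isEmpty [IsEmpty X] : IsExactSpace.{u, v} X :=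
  fun _ _ _ _ ↦ ⟨PEmpty, isEmptyElim, ⟨isEmptyElim, isEmptyElim⟩, isEmptyElim, 0, isEmptyElim⟩

theorem IsUniformlyExact.mono {𝒵 𝒲 : Set (Set X)} (h : IsUniformlyExact.{u, v} 𝒵) (hsub : 𝒲 ⊆ 𝒵) :
    IsUniformlyExact.{u, v} 𝒲 := by
  intro R ε hR hε
  obtain ⟨D, hD⟩ := h R ε hR hε
  exact ⟨D, fun Z hZ ↦ hD Z (hsub hZ)⟩

theorem isUniformlyExact_of_lipschitz {𝒵 : Set (Set X)}
    (h : ∀ δ : ℝ, 0 < δ → ∃ D : ℝ, ∀ Z ∈ 𝒵, ∃ (T : Type v) (φ : T → Z → ℝ),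
      IsPartitionOfUnity_s13 φ ∧ (∀ z w, ∑' t, |φ t z - φ t w| ≤ δ * dist z w + δ) ∧
        StrataDiamLE φ D) :
    IsUniformlyExact.{u, v} 𝒵 := by
  intro R ε hR hε
  have hδ : 0 < ε / (R + 1) := by positivity
  obtain ⟨D, hD⟩ := h (ε / (R + 1)) hδ
  refine ⟨D, fun Z hZ ↦ ?_⟩
  obtain ⟨T, φ, hφ, hlip, hstrata⟩ := hD Z hZ
  refine ⟨T, φ, hφ, fun z w hzw ↦ ?_, hstrata⟩
  calc ∑' t, |φ t z - φ t w| ≤ ε / (R + 1) * dist z w + ε / (R + 1) := hlip z w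
    _ ≤ ε / (R + 1) * R + ε / (R + 1) := by gcongr
    _ = ε := by field_simp

end Exact

section Tent

/-- The tent function of height `1` and support `[n - 1, n + 1]`; these functions form a partition
of unity on the real line. -/
noncomputable def tent (n : ℤ) (u : ℝ) : ℝ := max (1 - |u - n|) 0

theorem tent_pos_iff {n : ℤ} {u : ℝ} : 0 < tent n u ↔ |u - n| < 1 := by
  simp [tent]

theorem abs_tent_sub_tent_le (n : ℤ) (u v : ℝ) : |tent n u - tent n v| ≤ |u - v| :=
  calc |tent n u - tent n v| ≤ |(1 - |u - n|) - (1 - |v - n|)| := abs_max_sub_max_le_abs _ _ _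
    _ = |(|u - n| - |v - n|)| := by rw [sub_sub_sub_cancel_left, abs_sub_comm]
    _ ≤ |(u - n) - (v - n)| := abs_abs_sub_abs_le _ _
    _ = |u - v| := by rw [sub_sub_sub_cancel_right]

theorem tent_eq_zero_of_notMem {n : ℤ} {u : ℝ} (hn : n ∉ ({⌊u⌋, ⌊u⌋ + 1} : Finset ℤ)) :
    tent n u = 0 := by
  by_contra hne
  have hlt : |u - n| < 1 := tent_pos_iff.1 ((le_max_right _ _).lt_of_ne' hne)
  obtain ⟨hlo, hhi⟩ := abs_lt.1 hlt
  have hle : n - 1 ≤ ⌊u⌋ := Int.le_floor.2 (by push_cast; linarith)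
  have hge : ⌊u⌋ < n + 1 := Int.floor_lt.2 (by push_cast; linarith)
  exact hn (by rw [Finset.mem_insert, Finset.mem_singleton]; lia)

theorem isPartitionOfUnity_tent : IsPartitionOfUnity_s13 tent := by
  refine ⟨fun n u ↦ le_max_right _ _, fun u ↦ ?_⟩
  have hfloor : tent ⌊u⌋ u = 1 - Int.fract u := by
    rw [tent, Int.self_sub_floor, abs_of_nonneg (Int.fract_nonneg u),
      max_eq_left (sub_nonneg.2 (Int.fract_lt_one u).le)]
  have hsucc : tent (⌊u⌋ + 1) u = Int.fract u := by
    rw [tent, Int.cast_add, Int.cast_one, ← sub_sub, Int.self_sub_floor,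
      abs_of_neg (sub_neg.2 (Int.fract_lt_one u)), neg_sub, sub_sub_cancel,
      max_eq_left (Int.fract_nonneg u)]
  have hsum : ∑ n ∈ {⌊u⌋, ⌊u⌋ + 1}, tent n u = 1 := by
    rw [Finset.sum_pair (by lia), hfloor, hsucc, sub_add_cancel]
  exact hsum ▸ hasSum_sum_of_ne_finset_zero fun n hn ↦ tent_eq_zero_of_notMem hn

theorem isEpsContinuous_tent (r : ℝ) : IsEpsContinuous tent (4 * r) r := by
  intro u v huv
  let s : Finset ℤ := {⌊u⌋, ⌊u⌋ + 1} ∪ {⌊v⌋, ⌊v⌋ + 1}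
  have hcard : s.card ≤ 4 :=
    (Finset.card_union_le _ _).trans (add_le_add Finset.card_le_two Finset.card_le_two)
  have hsupp : ∀ n ∉ s, |tent n u - tent n v| = 0 := by
    intro n hn
    rw [Finset.mem_union, not_or] at hn
    rw [tent_eq_zero_of_notMem hn.1, tent_eq_zero_of_notMem hn.2, sub_zero, abs_zero]
  calc ∑' n, |tent n u - tent n v| = ∑ n ∈ s, |tent n u - tent n v| := tsum_eq_sum hsupp
    _ ≤ s.card • dist u v := Finset.sum_le_card_nsmul _ _ _ fun n _ ↦ abs_tent_sub_tent_le n u v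
    _ ≤ 4 * dist u v := by rw [nsmul_eq_mul]; gcongr; exact_mod_cast hcard
    _ ≤ 4 * r := by gcongr

theorem strataDiamLE_tent : StrataDiamLE tent 2 := by
  intro n u v hu hv
  have hun : dist u n < 1 := tent_pos_iff.1 hu
  have hvn : dist v n < 1 := tent_pos_iff.1 hv
  linarith [dist_triangle_right u v n]

theorem isExactSpace_real : IsExactSpace.{0, 0} ℝ := by
  intro R ε hR hε
  have hc : 0 < ε / (4 * R) := by positivity
  have hdist (u v : ℝ) : dist (ε / (4 * R) * u) (ε / (4 * R) * v) = ε / (4 * R) * dist u v := by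
    rw [Real.dist_eq, Real.dist_eq, ← mul_sub, abs_mul, abs_of_pos hc]
  have hscale (u v : ℝ) (huv : dist u v ≤ R) :
      dist (ε / (4 * R) * u) (ε / (4 * R) * v) ≤ ε / 4 :=
    calc _ = ε / (4 * R) * dist u v := hdist u v
      _ ≤ ε / (4 * R) * R := by gcongr
      _ = ε / 4 := by field_simp
  refine ⟨ℤ, fun n u ↦ tent n (ε / (4 * R) * u), isPartitionOfUnity_tent.comp _, ?_,
    2 / (ε / (4 * R)), fun n u v hu hv ↦ ?_⟩
  · simpa only [mul_div_cancel₀ ε four_ne_zero] using (isEpsContinuous_tent (ε / 4)).comp hscale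
  · rw [le_div_iff₀' hc, ← hdist]
    exact strataDiamLE_tent n _ _ hu hv

end Tent

section Glue

theorem tsum_abs_mul_sub_mul_le_s13 {T : Type*} {f g : T → ℝ} (hf : Summable f) (hg : Summable g)
    (a b : ℝ) :
    ∑' t, |a * f t - b * g t| ≤ |a - b| * ∑' t, |f t| + |b| * ∑' t, |f t - g t| := by
  have hpointwise (t : T) : |a * f t - b * g t| ≤ |a - b| * |f t| + |b| * |f t - g t| :=
    calc |a * f t - b * g t| = |(a - b) * f t + b * (f t - g t)| := by ring_nf
      _ ≤ |a - b| * |f t| + |b| * |f t - g t| := by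
        simpa only [abs_mul] using abs_add_le ((a - b) * f t) (b * (f t - g t))
  exact hasSum_le hpointwise ((hf.mul_left a).sub (hg.mul_left b)).abs.hasSum
    ((hf.abs.hasSum.mul_left _).add ((hf.sub hg).abs.hasSum.mul_left _))

variable {X J : Type*} {T : J → Type*} {Z : J → Set X} {ψ : J → X → ℝ} {φ : ∀ j, T j → Z j → ℝ}

/-- The family of products `ψ j * φ j t`, for combining a partition of unity `ψ` with partitions
of unity `φ j` of subsets `Z j` that contain its strata. Outside `Z j` the factor `φ j t` is
taken to be `0`. -/
noncomputable def gluedPartition (ψ : J → X → ℝ) (φ : ∀ j, T j → Z j → ℝ) (t : Σ j, T j) (x : X) :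
    ℝ :=
  ψ t.1 x * Function.extend Subtype.val (φ t.1 t.2) 0 x

theorem gluedPartition_coe (j : J) (t : T j) (z : Z j) :
    gluedPartition ψ φ ⟨j, t⟩ z = ψ j z * φ j t z := by
  rw [gluedPartition, Subtype.val_injective.extend_apply]

theorem gluedPartition_eq_zero {j : J} {x : X} (hx : ψ j x = 0) (t : T j) :
    gluedPartition ψ φ ⟨j, t⟩ x = 0 := by
  rw [gluedPartition, hx, zero_mul]

theorem gluedPartition_nonneg (hψ : IsPartitionOfUnity_s13 ψ) (hφ : ∀ j, IsPartitionOfUnity_s13 (φ j))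
    (t : Σ j, T j) (x : X) : 0 ≤ gluedPartition ψ φ t x := by
  refine mul_nonneg (hψ.nonneg t.1 x) ?_
  by_cases hx : x ∈ Z t.1
  · lift x to Z t.1 using hx
    exact (Subtype.val_injective.extend_apply _ _ x).symm ▸ (hφ t.1).nonneg t.2 x
  · rw [Function.extend_apply' _ _ _ (by simpa using hx), Pi.zero_apply]

theorem hasSum_gluedPartition_fiber (hψ : IsPartitionOfUnity_s13 ψ)
    (hφ : ∀ j, IsPartitionOfUnity_s13 (φ j)) (hZ : ∀ j x, 0 < ψ j x → x ∈ Z j) (j : J) (x : X) :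
    HasSum (fun t ↦ gluedPartition ψ φ ⟨j, t⟩ x) (ψ j x) := by
  rcases (hψ.nonneg j x).eq_or_lt' with hx | hx
  · simpa only [gluedPartition_eq_zero hx, hx] using hasSum_zero
  · lift x to Z j using hZ j x hx
    simpa only [gluedPartition_coe, mul_one] using ((hφ j).hasSum x).mul_left (ψ j x)

theorem isPartitionOfUnity_gluedPartition (hψ : IsPartitionOfUnity_s13 ψ)
    (hφ : ∀ j, IsPartitionOfUnity_s13 (φ j)) (hZ : ∀ j x, 0 < ψ j x → x ∈ Z j) :
    IsPartitionOfUnity_s13 (gluedPartition ψ φ) := by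
  refine ⟨gluedPartition_nonneg hψ hφ, fun x ↦ ?_⟩
  have hfiber (j : J) := hasSum_gluedPartition_fiber hψ hφ hZ j x
  refine (hψ.hasSum x).sigma_of_hasSum hfiber ?_
  refine (summable_sigma_of_nonneg fun t ↦ gluedPartition_nonneg hψ hφ t x).2
    ⟨fun j ↦ (hfiber j).summable, ?_⟩
  simpa only [(hfiber _).tsum_eq] using (hψ.hasSum x).summable

variable [PseudoMetricSpace X]

theorem strataDiamLE_gluedPartition (hψ : IsPartitionOfUnity_s13 ψ) {D : ℝ}
    (hφ : ∀ j, StrataDiamLE (φ j) D) (hZ : ∀ j x, 0 < ψ j x → x ∈ Z j) :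
    StrataDiamLE (gluedPartition ψ φ) D := by
  rintro ⟨j, t⟩ x y hx hy
  have hmem {z : X} (hz : 0 < gluedPartition ψ φ ⟨j, t⟩ z) : z ∈ Z j :=
    hZ j z ((hψ.nonneg j z).lt_of_ne' (left_ne_zero_of_mul hz.ne'))
  lift x to Z j using hmem hx
  lift y to Z j using hmem hy
  rw [gluedPartition_coe] at hx hy
  exact hφ j t x y (pos_of_mul_pos_right hx (hψ.nonneg j x))
    (pos_of_mul_pos_right hy (hψ.nonneg j y))

theorem tsum_abs_gluedPartition_sub_le (hψ : IsPartitionOfUnity_s13 ψ)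
    (hφ : ∀ j, IsPartitionOfUnity_s13 (φ j)) {ε R : ℝ} (hcont : ∀ j, IsEpsContinuous (φ j) ε R)
    (hZ : ∀ j x y, dist x y ≤ R → 0 < ψ j x → y ∈ Z j) {x y : X} (hxy : dist x y ≤ R) (j : J) :
    ∑' t, |gluedPartition ψ φ ⟨j, t⟩ x - gluedPartition ψ φ ⟨j, t⟩ y| ≤
      |ψ j x - ψ j y| + ψ j y * ε := by
  have hR : 0 ≤ R := dist_nonneg.trans hxy
  have hself (z : X) : dist z z ≤ R := (dist_self z).trans_le hR
  by_cases hzero : ψ j x = 0 ∧ ψ j y = 0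
  · simp only [gluedPartition_eq_zero hzero.1, gluedPartition_eq_zero hzero.2, hzero.1, hzero.2,
      sub_zero, abs_zero, tsum_zero, zero_mul, add_zero, le_refl]
  have hmem : x ∈ Z j ∧ y ∈ Z j := by
    rcases not_and_or.1 hzero with h | h
    · have hpos : 0 < ψ j x := (hψ.nonneg j x).lt_of_ne' h
      exact ⟨hZ j x x (hself x) hpos, hZ j x y hxy hpos⟩
    · have hpos : 0 < ψ j y := (hψ.nonneg j y).lt_of_ne' h
      exact ⟨hZ j y x (dist_comm x y ▸ hxy) hpos, hZ j y y (hself y) hpos⟩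
  lift x to Z j using hmem.1
  lift y to Z j using hmem.2
  simp only [gluedPartition_coe]
  calc ∑' t, |ψ j x * φ j t x - ψ j y * φ j t y|
      ≤ |ψ j x - ψ j y| * ∑' t, |φ j t x| + |ψ j y| * ∑' t, |φ j t x - φ j t y| :=
        tsum_abs_mul_sub_mul_le_s13 ((hφ j).hasSum x).summable ((hφ j).hasSum y).summable _ _
    _ = |ψ j x - ψ j y| + ψ j y * ∑' t, |φ j t x - φ j t y| := by
        rw [(hφ j).tsum_abs_eq_one, mul_one, abs_of_nonneg (hψ.nonneg j y)]
    _ ≤ |ψ j x - ψ j y| + ψ j y * ε := by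
        gcongr
        · exact hψ.nonneg j y
        · exact hcont j x y hxy

theorem isEpsContinuous_gluedPartition (hψ : IsPartitionOfUnity_s13 ψ)
    (hφ : ∀ j, IsPartitionOfUnity_s13 (φ j)) {ε ε' R : ℝ} (hψcont : IsEpsContinuous ψ ε R)
    (hφcont : ∀ j, IsEpsContinuous (φ j) ε' R)
    (hZ : ∀ j x y, dist x y ≤ R → 0 < ψ j x → y ∈ Z j) :
    IsEpsContinuous (gluedPartition ψ φ) (ε + ε') R := by
  intro x y hxy
  have hR : 0 ≤ R := dist_nonneg.trans hxy
  have hglue : IsPartitionOfUnity_s13 (gluedPartition ψ φ) :=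
    isPartitionOfUnity_gluedPartition hψ hφ fun j z ↦ hZ j z z ((dist_self z).trans_le hR)
  have hsummable := hglue.summable_abs_sub_s13 x y
  calc ∑' t, |gluedPartition ψ φ t x - gluedPartition ψ φ t y|
      = ∑' j, ∑' t, |gluedPartition ψ φ ⟨j, t⟩ x - gluedPartition ψ φ ⟨j, t⟩ y| :=
        hsummable.tsum_sigma
    _ ≤ ∑' j, |ψ j x - ψ j y| + 1 * ε' :=
        hasSum_le (tsum_abs_gluedPartition_sub_le hψ hφ hφcont hZ hxy) hsummable.sigma.hasSum
          ((hψ.summable_abs_sub_s13 x y).hasSum.add ((hψ.hasSum y).mul_right ε'))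
    _ ≤ ε + ε' := by rw [one_mul]; gcongr; exact hψcont x y hxy

end Glue

section Fibering

variable {X : Type u} [PseudoMetricSpace X]

theorem IsExactSpace.of_fibering {Y : Type*} [PseudoMetricSpace Y] (hY : IsExactSpace.{_, w} Y)
    {p : X → Y} (hp : ∀ R : ℝ, ∃ L : ℝ, ∀ x y, dist x y ≤ R → dist (p x) (p y) ≤ L)
    (hfiber : ∀ D : ℝ, IsUniformlyExact.{u, v}
      {Z : Set X | ∀ x ∈ Z, ∀ y ∈ Z, dist (p x) (p y) ≤ D}) :
    IsExactSpace.{u, max v w} X := by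
  intro R ε hR hε
  obtain ⟨L, hL⟩ := hp R
  obtain ⟨J, ψ, hψ, hψcont, D, hD⟩ := hY (max L 1) (ε / 2) (by positivity) (half_pos hε)
  let Z (j : J) : Set X := {x | ∃ y, dist y x ≤ R ∧ 0 < ψ j (p y)}
  have hZ (j : J) (x y : X) (hxy : dist x y ≤ R) (hx : 0 < ψ j (p x)) : y ∈ Z j := ⟨x, hxy, hx⟩
  have hZself (j : J) (x : X) : 0 < ψ j (p x) → x ∈ Z j := hZ j x x ((dist_self x).trans_le hR.le)
  have hZdist (j : J) : ∀ x ∈ Z j, ∀ y ∈ Z j, dist (p x) (p y) ≤ L + D + L := by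
    rintro x ⟨x', hx, hx'⟩ y ⟨y', hy, hy'⟩
    calc dist (p x) (p y) ≤ dist (p x) (p x') + dist (p x') (p y') + dist (p y') (p y) :=
          dist_triangle4 _ _ _ _
      _ ≤ L + D + L := by
          gcongr
          · exact hL x x' (dist_comm x x' ▸ hx)
          · exact hD j _ _ hx' hy'
          · exact hL y' y hy
  obtain ⟨K, hK⟩ := hfiber (L + D + L) R (ε / 2) hR (half_pos hε)
  choose T φ hφ hφcont hφstrata using fun j ↦ hK (Z j) (hZdist j)
  have hψp := hψ.comp p
  have hψpcont := hψcont.comp fun x y hxy ↦ (hL x y hxy).trans (le_max_left L 1)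
  exact ⟨Σ j, T j, gluedPartition _ φ, isPartitionOfUnity_gluedPartition hψp hφ hZself,
    add_halves ε ▸ isEpsContinuous_gluedPartition hψp hφ hψpcont hφcont hZ,
    K, strataDiamLE_gluedPartition hψp hφstrata hZself⟩

theorem isBounded_of_dist_dist_le {x₀ : X} {Z : Set X} {D : ℝ}
    (hZ : ∀ x ∈ Z, ∀ y ∈ Z, dist (dist x x₀) (dist y x₀) ≤ D) : Bornology.IsBounded Z := by
  rcases Z.eq_empty_or_nonempty with rfl | ⟨y, hy⟩
  · exact Bornology.isBounded_empty
  · exact Metric.isBounded_closedBall.subset (t := Metric.closedBall x₀ (dist y x₀ + D))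
      fun x hx ↦ sub_le_iff_le_add'.1 ((le_abs_self _).trans (hZ x hx y hy))

theorem stmt13_general (h : IsUniformlyExact.{u, v} {Z : Set X | Bornology.IsBounded Z}) :
    IsExactSpace.{u, v} X := by
  rcases isEmpty_or_nonempty X with _ | ⟨⟨x₀⟩⟩
  · exact isExactSpace_of_isEmpty
  · exact isExactSpace_real.of_fibering (p := fun x ↦ dist x x₀)
      (fun R ↦ ⟨R, fun x y hxy ↦ (abs_dist_sub_le x y x₀).trans hxy⟩)
      fun D ↦ h.mono fun Z ↦ isBounded_of_dist_dist_le

end Fibering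

/-- Let `X` be a pseudo-metric space and `S` a set of cardinality larger
than `card (X × ℕ)`. If there are functions `α : (0,∞) → (0,∞)` and
`M : (0,∞)² → (0,∞)` such that for every bounded `Z ⊆ X`, every `δ, K > 0`, every
`A ⊆ Z`, and every `(α(δ),α(δ))`-Lipschitz `K`-cobounded map `f : A → Δ(S)`, the map `f`
extends to a `(δ,δ)`-Lipschitz `M(δ,K)`-cobounded map `g : Z → Δ(S)` (so that all bounded
subsets of `X` are exact uniformly), then `X` is exact. -/
theorem stmt13 {X S : Type} [PseudoMetricSpace X]
    (hcard : Cardinal.mk (X × ℕ) < Cardinal.mk S)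
    (α : ℝ → ℝ) (M : ℝ → ℝ → ℝ)
    (hα : ∀ δ : ℝ, 0 < δ → 0 < α δ)
    (hM : ∀ δ K : ℝ, 0 < δ → 0 < K → 0 < M δ K)
    (hext : ∀ Z : Set X, Bornology.IsBounded Z →
      ∀ δ : ℝ, 0 < δ → ∀ K : ℝ, 0 < K → ∀ A : Set X, ∀ hAZ : A ⊆ Z, ∀ f : A → S → ℝ,
        ((∀ a s, 0 ≤ f a s) ∧ ∀ a, HasSum (fun s => f a s) 1) →
        (∀ a b : A, (∑' s, |f a s - f b s|) ≤ α δ * dist (a : X) (b : X) + α δ) →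
        (∀ s, ∀ a b : A, 0 < f a s → 0 < f b s → dist (a : X) (b : X) ≤ K) →
        ∃ g : Z → S → ℝ,
          ((∀ z s, 0 ≤ g z s) ∧ ∀ z, HasSum (fun s => g z s) 1) ∧
          (∀ z w : Z, (∑' s, |g z s - g w s|) ≤ δ * dist (z : X) (w : X) + δ) ∧
          (∀ s, ∀ z w : Z, 0 < g z s → 0 < g w s → dist (z : X) (w : X) ≤ M δ K) ∧
          (∀ (x : X) (hx : x ∈ A), g ⟨x, hAZ hx⟩ = f ⟨x, hx⟩)) :
    ∀ R ε : ℝ, 0 < R → 0 < ε → ∃ (T : Type) (φ : T → X → ℝ),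
      (∀ t x, 0 ≤ φ t x ∧ φ t x ≤ 1) ∧
      (∀ x, HasSum (fun t => φ t x) 1) ∧
      (∀ x y : X, dist x y ≤ R → (∑' t, |φ t x - φ t y|) ≤ ε) ∧
      (∃ D : ℝ, 0 < D ∧ ∀ t, ∀ x y : X, 0 < φ t x → 0 < φ t y → dist x y ≤ D) := by
  refine isExactSpace_iff.1 <| stmt13_general <| isUniformlyExact_of_lipschitz fun δ hδ ↦
    ⟨M δ 1, fun Z hZ ↦ ?_⟩
  obtain ⟨g, ⟨hnonneg, hsum⟩, hlip, hcobdd, -⟩ := hext Z hZ δ hδ 1 one_pos ∅ (Set.empty_subset Z)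
    isEmptyElim ⟨isEmptyElim, isEmptyElim⟩ isEmptyElim fun _ ↦ isEmptyElim
  exact ⟨S, fun s z ↦ g z s, ⟨fun s z ↦ hnonneg z s, hsum⟩, hlip, hcobdd⟩
end

section
/- Let X be an ∞-pseudo-metric space and n ≥ 0 a natural number. The following conditions are equivalent: (1) for every R, ε > 0 there is an (ε,R)-continuous partition of unity on X of dimension at most n (each point belongs to at most n+1 strata) whose strata are uniformly bounded; (2) for every R > 0, X decomposes as a finite union X = ⋃_{k=0}^n X_k where each X_k is the union of an R-disjoint uniformly bounded family of subsets of X; (3) for every R > 0, X has a uniformly bounded cover of Lebesgue number at least R and multiplicity at most n+1. -/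
open scoped ENNReal

/-!
(1) ⇒ (2): as `φ x` has at most `n + 1` positive coordinates, two consecutive superlevel sets
`{s | j δ < φ_s x}` must coincide, so a gap of width `δ` separates the coordinates at `x` into
large ones, indexed by a finite set `σ`, and small ones. Grouping points by `σ`, and the sets `σ`
by cardinality, gives the decomposition: if `σ ≠ τ` have equal cardinality, then some coordinate is
large at one point and small at the other, and the other way round for a second coordinate, so `φ`
moves by more than `δ` between them.

(2) ⇒ (3): thickening the pieces of a decomposition by less than half their separation keeps each
family disjoint.

(3) ⇒ (1): normalise the bump functions that equal `1` where the ball of radius `δ` lies in `V` and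
vanish off `V`. They are `1/δ`-Lipschitz with sum at least `1`, so a large `δ` makes the quotients
vary slowly.
-/

universe u

section Notions

variable {X : Type u}

/-- The multiplicity of the indexed family `A` is at most `m`: each point lies in at most `m` of its
members. -/
def HasMultiplicityLE {ι : Type*} (A : ι → Set X) (m : ℕ) : Prop :=
  ∀ x, ∃ G : Finset ι, G.card ≤ m ∧ ∀ i, x ∈ A i → i ∈ G

/-- An `r`-disjoint family of sets: points of distinct members are at distance at least `r`. -/
def IsDisjointFamily [EDist X] (r : ℝ≥0∞) (F : Set (Set X)) : Prop :=
  ∀ A ∈ F, ∀ B ∈ F, A ≠ B → ∀ x ∈ A, ∀ y ∈ B, r ≤ edist x y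

variable (X) [PseudoEMetricSpace X] (n : ℕ)

/-- Condition (1): there are `(ε, R)`-continuous partitions of unity of dimension at most `n` with
uniformly bounded strata, for all `R` and `ε`. -/
def HasPartitionsOfUnity : Prop :=
  ∀ R ε : ℝ, 0 < R → 0 < ε → ∃ (S : Type u) (φ : S → X → ℝ),
    (∀ s x, 0 ≤ φ s x ∧ φ s x ≤ 1) ∧
    (∀ x, HasSum (fun s => φ s x) 1) ∧
    HasMultiplicityLE (fun s => {x | 0 < φ s x}) (n + 1) ∧
    (∀ x y, edist x y ≤ ENNReal.ofReal R → ∑' s, |φ s x - φ s y| ≤ ε) ∧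
    ∃ D : ℝ, 0 < D ∧ ∀ s, Metric.ediam {x | 0 < φ s x} ≤ ENNReal.ofReal D

/-- Condition (2): `X` decomposes into `n + 1` uniformly bounded `R`-disjoint families, for
all `R`. -/
def HasDisjointDecompositions : Prop :=
  ∀ R : ℝ, 0 < R → ∃ (F : Fin (n + 1) → Set (Set X)) (D : ℝ), 0 < D ∧
    ⋃ k, ⋃₀ F k = Set.univ ∧
    (∀ k, IsDisjointFamily (ENNReal.ofReal R) (F k)) ∧
    ∀ k, ∀ A ∈ F k, Metric.ediam A ≤ ENNReal.ofReal D

/-- Condition (3): `X` has uniformly bounded covers of multiplicity at most `n + 1` and Lebesgue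
number at least `R`, for all `R`. -/
def HasLebesgueCovers : Prop :=
  ∀ R : ℝ, 0 < R → ∃ (𝒱 : Set (Set X)) (D : ℝ), 0 < D ∧
    ⋃₀ 𝒱 = Set.univ ∧
    (∀ x, ∃ V ∈ 𝒱, Metric.closedEBall x (ENNReal.ofReal R) ⊆ V) ∧
    (∀ x, ∃ G : Finset (Set X), G.card ≤ n + 1 ∧ ∀ V ∈ 𝒱, x ∈ V → V ∈ G) ∧
    ∀ V ∈ 𝒱, Metric.ediam V ≤ ENNReal.ofReal D

end Notions

section Multiplicity

variable {X : Type*}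

lemma HasMultiplicityLE.mono {ι : Type*} {A B : ι → Set X} {m : ℕ} (hB : HasMultiplicityLE B m)
    (hAB : ∀ i, A i ⊆ B i) : HasMultiplicityLE A m := fun x =>
  (hB x).imp fun _ hG => ⟨hG.1, fun i hi => hG.2 i (hAB i hi)⟩

lemma hasMultiplicityLE_coe {𝒱 : Set (Set X)} {m : ℕ}
    (h : ∀ x, ∃ G : Finset (Set X), G.card ≤ m ∧ ∀ V ∈ 𝒱, x ∈ V → V ∈ G) :
    HasMultiplicityLE (fun V : 𝒱 => (V : Set X)) m := by
  classical
  intro x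
  obtain ⟨G, hGcard, hG⟩ := h x
  refine ⟨G.subtype (· ∈ 𝒱), ?_, fun V hxV => Finset.mem_subtype.2 (hG V V.2 hxV)⟩
  rw [Finset.card_subtype]
  exact (Finset.card_filter_le _ _).trans hGcard

lemma exists_finset_of_pairwiseDisjoint {κ α : Type*} [Fintype κ] {F : κ → Set α}
    {f : α → Set X} (hF : ∀ k, (F k).PairwiseDisjoint f) (x : X) :
    ∃ G : Finset (Set X), G.card ≤ Fintype.card κ ∧ ∀ k, ∀ a ∈ F k, x ∈ f a → f a ∈ G := by
  classical
  have exists_unique_member (k : κ) : ∃ C, ∀ a ∈ F k, x ∈ f a → f a = C := by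
    by_cases h : ∃ a ∈ F k, x ∈ f a
    · obtain ⟨a, ha, hxa⟩ := h
      exact ⟨f a, fun b hb hxb => congrArg f ((hF k).elim_set hb ha x hxb hxa)⟩
    · push Not at h
      exact ⟨∅, fun a ha hxa => absurd hxa (h a ha)⟩
  choose C hC using exists_unique_member
  refine ⟨Finset.univ.image C, Finset.card_image_le, fun k a ha hxa => ?_⟩
  exact Finset.mem_image.2 ⟨k, Finset.mem_univ k, (hC k a ha hxa).symm⟩

end Multiplicity

section Gap

lemma exists_gap_of_card_nsmul_lt {ι M : Type*} [AddCommMonoid M] [LinearOrder M]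
    [IsOrderedAddMonoid M] {v : ι → M} {δ : M} (hδ : 0 ≤ δ) {F : Finset ι}
    (hF : ∀ s, 0 < v s → s ∈ F) {m : ι} (hm : F.card • δ < v m) :
    ∃ σ ⊆ F, σ.Nonempty ∧ (∀ s ∈ σ, 0 < v s) ∧ ∀ s ∈ σ, ∀ t ∉ σ, v t + δ < v s := by
  classical
  let level (j : ℕ) : Finset ι := {s ∈ F | j • δ < v s}
  have mem_level {j : ℕ} {s : ι} : s ∈ level j ↔ j • δ < v s :=
    Finset.mem_filter.trans <| and_iff_right_of_imp fun h => hF s ((nsmul_nonneg hδ j).trans_lt h)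
  have level_succ_subset (j : ℕ) : level (j + 1) ⊆ level j := fun s hs =>
    mem_level.2 ((nsmul_le_nsmul_left hδ j.le_succ).trans_lt (mem_level.1 hs))
  obtain ⟨j, hj, hlevel⟩ : ∃ j < F.card, level (j + 1) = level j := by
    by_contra! hne
    have card_level_add_le (j : ℕ) (hj : j ≤ F.card) : (level j).card + j ≤ F.card := by
      induction j with
      | zero => exact Finset.card_filter_le _ _
      | succ j ih =>
        have := Finset.card_lt_card ((level_succ_subset j).ssubset_of_ne (hne j hj))
        have := ih (Nat.le_of_succ_le hj)
        omega
    have := card_level_add_le F.card le_rfl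
    have := Finset.card_pos.2 ⟨m, mem_level.2 hm⟩
    omega
  refine ⟨level j, Finset.filter_subset _ _,
    ⟨m, mem_level.2 ((nsmul_le_nsmul_left hδ hj.le).trans_lt hm)⟩,
    fun s hs => (nsmul_nonneg hδ j).trans_lt (mem_level.1 hs), fun s hs t ht => ?_⟩
  calc
    v t + δ ≤ j • δ + δ := by gcongr; exact not_lt.1 (mt mem_level.2 ht)
    _ = (j + 1) • δ := (succ_nsmul δ j).symm
    _ < v s := mem_level.1 (hlevel ▸ hs)

lemma exists_lt_of_card_mul_lt_hasSum {ι : Type*} {v : ι → ℝ} (hv : ∀ s, 0 ≤ v s) {a : ℝ}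
    (hsum : HasSum v a) {F : Finset ι} (hF : ∀ s, 0 < v s → s ∈ F) {c : ℝ}
    (hc : F.card * c < a) : ∃ s, c < v s := by
  have hsumF : ∑ s ∈ F, v s = a :=
    (hasSum_sum_of_ne_finset_zero fun s hs =>
      ((hv s).eq_or_lt.resolve_right (mt (hF s) hs)).symm).unique hsum
  obtain ⟨s, -, hs⟩ : ∃ s ∈ F, c < v s :=
    Finset.exists_lt_of_sum_lt (by simpa [hsumF] using hc)
  exact ⟨s, hs⟩

variable {X : Type*} {ι : Type*} {φ : ι → X → ℝ} {δ : ℝ}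

/-- The set of points at which the coordinates `φ s`, `s ∈ σ`, are positive and exceed all other
coordinates by more than `δ`; these sets are the pieces of the decomposition obtained from a
partition of unity `φ`. -/
def gapSet (φ : ι → X → ℝ) (δ : ℝ) (σ : Finset ι) : Set X :=
  {x | (∀ s ∈ σ, 0 < φ s x) ∧ ∀ s ∈ σ, ∀ t ∉ σ, φ t x + δ < φ s x}

lemma exists_mem_gapSet (hδ : 0 ≤ δ) {m : ℕ} (hm : (m : ℝ) * (m * δ) < 1) {x : X}
    (hφ : ∀ s, 0 ≤ φ s x) (hsum : HasSum (fun s => φ s x) 1)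
    (hmult : HasMultiplicityLE (fun s => {x | 0 < φ s x}) m) :
    ∃ σ : Finset ι, σ.Nonempty ∧ σ.card ≤ m ∧ x ∈ gapSet φ δ σ := by
  obtain ⟨F, hFcard, hF⟩ := hmult x
  have hFcard' : (F.card : ℝ) ≤ m := by exact_mod_cast hFcard
  obtain ⟨s, hs⟩ := exists_lt_of_card_mul_lt_hasSum hφ hsum hF (c := F.card • δ) <| by
    rw [nsmul_eq_mul]
    exact lt_of_le_of_lt (by gcongr) hm
  obtain ⟨σ, hσF, hσ, hpos, hgap⟩ := exists_gap_of_card_nsmul_lt hδ hF hs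
  exact ⟨σ, hσ, (Finset.card_le_card hσF).trans hFcard, hpos, hgap⟩

lemma exists_lt_abs_sub_of_mem_gapSet {σ τ : Finset ι} (hcard : σ.card = τ.card) (hne : σ ≠ τ)
    {x y : X} (hx : x ∈ gapSet φ δ σ) (hy : y ∈ gapSet φ δ τ) : ∃ s, δ < |φ s x - φ s y| := by
  obtain ⟨s, hsσ, hsτ⟩ : ∃ s ∈ σ, s ∉ τ :=
    Finset.not_subset.1 fun h => hne (Finset.eq_of_subset_of_card_le h hcard.ge)
  obtain ⟨t, htτ, htσ⟩ : ∃ t ∈ τ, t ∉ σ :=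
    Finset.not_subset.1 fun h => hne (Finset.eq_of_subset_of_card_le h hcard.le).symm
  by_contra! hle
  have hxgap : φ t x + δ < φ s x := hx.2 s hsσ t htσ
  have hygap : φ s y + δ < φ t y := hy.2 t htτ s hsτ
  linarith [le_of_abs_le (hle s), neg_le_of_abs_le (hle t)]

lemma isDisjointFamily_gapSet [EDist X] {r : ℝ≥0∞}
    (hφ : ∀ x y, edist x y < r → ∀ s, |φ s x - φ s y| ≤ δ) (k : ℕ) :
    IsDisjointFamily r (gapSet φ δ '' {σ | σ.card = k}) := by
  rintro _ ⟨σ, hσ, rfl⟩ _ ⟨τ, hτ, rfl⟩ hne x hx y hy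
  by_contra! hlt
  obtain ⟨s, hs⟩ :=
    exists_lt_abs_sub_of_mem_gapSet (hσ.trans hτ.symm) (ne_of_apply_ne _ hne) hx hy
  exact hs.not_ge (hφ x y hlt s)

end Gap

section Thickening

variable {X : Type*} [PseudoEMetricSpace X]

open Metric

lemma pairwiseDisjoint_thickening {δ : ℝ} {F : Set (Set X)}
    (hF : IsDisjointFamily (2 * ENNReal.ofReal δ) F) : F.PairwiseDisjoint (thickening δ) := by
  refine fun A hA B hB hne => Set.disjoint_left.2 fun x hxA hxB => ?_
  obtain ⟨a, ha, hxa⟩ := (mem_thickening_iff_exists_edist_lt A x).1 hxA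
  obtain ⟨b, hb, hxb⟩ := (mem_thickening_iff_exists_edist_lt B x).1 hxB
  refine (hF A hA B hB hne a ha b hb).not_gt ?_
  calc
    edist a b ≤ edist x a + edist x b := edist_triangle_left a b x
    _ < ENNReal.ofReal δ + ENNReal.ofReal δ := ENNReal.add_lt_add hxa hxb
    _ = 2 * ENNReal.ofReal δ := (two_mul _).symm

lemma thickening_setOf_closedEBall_subset (δ : ℝ) (V : Set X) :
    thickening δ {x | closedEBall x (ENNReal.ofReal δ) ⊆ V} ⊆ V := by
  intro y hy
  obtain ⟨x, hx, hyx⟩ := (mem_thickening_iff_exists_edist_lt _ y).1 hy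
  exact hx hyx.le

lemma ediam_thickening_le_ofReal {δ D : ℝ} (hδ : 0 ≤ δ) (hD : 0 ≤ D) {A : Set X}
    (hA : ediam A ≤ ENNReal.ofReal D) :
    ediam (thickening δ A) ≤ ENNReal.ofReal (D + 2 * δ) := by
  lift δ to NNReal using hδ
  calc
    ediam (thickening δ A) ≤ ediam A + 2 * δ := ediam_thickening_le δ
    _ ≤ ENNReal.ofReal D + 2 * δ := by gcongr
    _ = ENNReal.ofReal (D + 2 * δ) := by
      rw [ENNReal.ofReal_add hD (by positivity), ENNReal.ofReal_mul zero_le_two,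
        ENNReal.ofReal_ofNat, ENNReal.ofReal_coe_nnreal]

end Thickening

section Normalization

variable {ι : Type*}

lemma abs_div_sub_div_le {a b U V : ℝ} (hb : 0 ≤ b) (hU : 0 < U) (hV : 0 < V) :
    |a / U - b / V| ≤ |a - b| / U + b * (|U - V| / (U * V)) := by
  have hsplit : a / U - b / V = (a - b) / U - b * ((U - V) / (U * V)) := by
    field_simp
    ring
  calc
    |a / U - b / V| ≤ |(a - b) / U| + |b * ((U - V) / (U * V))| := hsplit ▸ abs_sub _ _
    _ = |a - b| / U + b * (|U - V| / (U * V)) := by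
      rw [abs_div, abs_mul, abs_div, abs_of_pos hU, abs_of_pos (mul_pos hU hV), abs_of_nonneg hb]

lemma tsum_abs_div_tsum_sub_div_tsum_le {u v : ι → ℝ} (hu : Summable u) (hv : Summable v)
    (hv_nonneg : ∀ i, 0 ≤ v i) (hu_pos : 0 < ∑' i, u i) (hv_pos : 0 < ∑' i, v i) :
    ∑' i, |u i / (∑' j, u j) - v i / ∑' j, v j| ≤ 2 * (∑' i, |u i - v i|) / ∑' i, u i := by
  set U := ∑' i, u i
  set V := ∑' i, v i
  have hdiff : Summable fun i => |u i - v i| := (hu.sub hv).abs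
  have hUV : |U - V| ≤ ∑' i, |u i - v i| := by
    rw [← hu.tsum_sub hv]
    exact norm_tsum_le_tsum_norm (f := fun i => u i - v i) hdiff
  have hbound : HasSum (fun i => |u i - v i| / U + v i * (|U - V| / (U * V)))
      ((∑' i, |u i - v i|) / U + V * (|U - V| / (U * V))) :=
    (hdiff.hasSum.div_const U).add (hv.hasSum.mul_right _)
  have hquot : Summable fun i => |u i / U - v i / V| := ((hu.div_const U).sub (hv.div_const V)).abs
  calc
    ∑' i, |u i / U - v i / V| ≤ (∑' i, |u i - v i|) / U + V * (|U - V| / (U * V)) :=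
      hasSum_le (fun i => abs_div_sub_div_le (hv_nonneg i) hu_pos hv_pos) hquot.hasSum hbound
    _ = (∑' i, |u i - v i|) / U + |U - V| / U := by
      rw [mul_div_left_comm, div_mul_cancel_right₀ hv_pos.ne', div_eq_mul_inv |U - V|]
    _ ≤ (∑' i, |u i - v i|) / U + (∑' i, |u i - v i|) / U := by gcongr
    _ = 2 * (∑' i, |u i - v i|) / U := by ring

lemma tsum_abs_sub_le {m : ℕ} {u v : ι → ℝ} {G H : Finset ι} (hG : G.card ≤ m)
    (hH : H.card ≤ m) (hu : ∀ i ∉ G, u i = 0) (hv : ∀ i ∉ H, v i = 0) {c : ℝ}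
    (huv : ∀ i, |u i - v i| ≤ c) (hc : 0 ≤ c) : ∑' i, |u i - v i| ≤ 2 * m * c := by
  classical
  have hcard : ((G ∪ H).card : ℝ) ≤ 2 * m := by
    have := Finset.card_union_le G H
    exact_mod_cast (by omega : (G ∪ H).card ≤ 2 * m)
  have hzero (i : ι) (hi : i ∉ G ∪ H) : |u i - v i| = 0 := by
    rw [Finset.notMem_union] at hi
    rw [hu i hi.1, hv i hi.2, sub_zero, abs_zero]
  calc
    ∑' i, |u i - v i| = ∑ i ∈ G ∪ H, |u i - v i| := tsum_eq_sum hzero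
    _ ≤ (G ∪ H).card • c := Finset.sum_le_card_nsmul _ _ _ fun i _ => huv i
    _ ≤ 2 * m * c := by
      rw [nsmul_eq_mul]
      gcongr

end Normalization

section ThickenedPartition

open Metric

variable {X : Type*} [PseudoEMetricSpace X] {ι : Type*} {δ : ℝ}

lemma dist_le_mul_of_lipschitzWith {Y : Type*} [PseudoMetricSpace Y] {f : X → Y} {K : NNReal}
    (hf : LipschitzWith K f) {R : ℝ} (hR : 0 ≤ R) {x y : X} (h : edist x y ≤ ENNReal.ofReal R) :
    dist (f x) (f y) ≤ K * R := by
  rw [dist_edist]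
  refine ENNReal.toReal_le_of_le_ofReal (by positivity) ?_
  calc
    edist (f x) (f y) ≤ K * ENNReal.ofReal R := hf.edist_le_mul_of_le h
    _ = ENNReal.ofReal (K * R) := by
      rw [ENNReal.ofReal_mul K.coe_nonneg, ENNReal.ofReal_coe_nnreal]

lemma abs_thickenedIndicator_sub_le (hδ : 0 < δ) (E : Set X) {R : ℝ} (hR : 0 ≤ R) {x y : X}
    (h : edist x y ≤ ENNReal.ofReal R) :
    |(thickenedIndicator hδ E x : ℝ) - thickenedIndicator hδ E y| ≤ R / δ := by
  have := dist_le_mul_of_lipschitzWith (lipschitzWith_thickenedIndicator hδ E) hR h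
  rwa [NNReal.dist_eq, NNReal.coe_inv, Real.coe_toNNReal δ hδ.le, inv_mul_eq_div] at this

/-- The functions obtained from the thickened indicators of the sets `E i` at scale `δ` by dividing
by their sum. They form a partition of unity when the sets `E i` cover the space and their
`δ`-thickenings have finite multiplicity. -/
noncomputable def thickenedPartition (hδ : 0 < δ) (E : ι → Set X) (i : ι) (x : X) : ℝ :=
  thickenedIndicator hδ (E i) x / ∑' j, (thickenedIndicator hδ (E j) x : ℝ)

variable (hδ : 0 < δ) {E : ι → Set X} {m : ℕ}

lemma thickenedPartition_nonneg (i : ι) (x : X) : 0 ≤ thickenedPartition hδ E i x :=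
  div_nonneg (NNReal.coe_nonneg _) (tsum_nonneg fun _ => NNReal.coe_nonneg _)

lemma setOf_thickenedPartition_pos_subset (i : ι) :
    {x | 0 < thickenedPartition hδ E i x} ⊆ thickening δ (E i) := by
  intro x hx
  by_contra hxE
  rw [Set.mem_ofPred_eq, thickenedPartition, thickenedIndicator_zero hδ (E i) hxE, NNReal.coe_zero,
    zero_div] at hx
  exact hx.false

variable (hmult : HasMultiplicityLE (fun i => thickening δ (E i)) m)
include hmult

lemma exists_finset_thickenedIndicator_eq_zero (x : X) :
    ∃ G : Finset ι, G.card ≤ m ∧ ∀ i ∉ G, (thickenedIndicator hδ (E i) x : ℝ) = 0 := by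
  obtain ⟨G, hGcard, hG⟩ := hmult x
  refine ⟨G, hGcard, fun i hi => ?_⟩
  rw [thickenedIndicator_zero hδ (E i) (mt (hG i) hi), NNReal.coe_zero]

lemma summable_thickenedIndicator (x : X) :
    Summable fun i => (thickenedIndicator hδ (E i) x : ℝ) := by
  obtain ⟨G, -, hG⟩ := exists_finset_thickenedIndicator_eq_zero hδ hmult x
  exact summable_of_ne_finset_zero hG

variable (hcover : ∀ x, ∃ i, x ∈ E i)
include hcover

lemma one_le_tsum_thickenedIndicator (x : X) :
    1 ≤ ∑' i, (thickenedIndicator hδ (E i) x : ℝ) := by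
  obtain ⟨i, hi⟩ := hcover x
  calc
    (1 : ℝ) = thickenedIndicator hδ (E i) x := by
      rw [thickenedIndicator_one hδ (E i) hi, NNReal.coe_one]
    _ ≤ ∑' i, (thickenedIndicator hδ (E i) x : ℝ) :=
      (summable_thickenedIndicator hδ hmult x).le_tsum i fun _ _ => NNReal.coe_nonneg _

lemma hasSum_thickenedPartition (x : X) : HasSum (fun i => thickenedPartition hδ E i x) 1 := by
  have hpos := one_pos.trans_le (one_le_tsum_thickenedIndicator hδ hmult hcover x)
  rw [← div_self hpos.ne']
  exact (summable_thickenedIndicator hδ hmult x).hasSum.div_const _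

lemma tsum_abs_thickenedPartition_sub_le {R : ℝ} (hR : 0 ≤ R) {x y : X}
    (h : edist x y ≤ ENNReal.ofReal R) :
    ∑' i, |thickenedPartition hδ E i x - thickenedPartition hδ E i y| ≤ 4 * m * R / δ := by
  obtain ⟨G, hGcard, hG⟩ := exists_finset_thickenedIndicator_eq_zero hδ hmult x
  obtain ⟨H, hHcard, hH⟩ := exists_finset_thickenedIndicator_eq_zero hδ hmult y
  have hx := one_le_tsum_thickenedIndicator hδ hmult hcover x
  have hy := one_le_tsum_thickenedIndicator hδ hmult hcover y
  set u : ι → ℝ := fun i => thickenedIndicator hδ (E i) x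
  set v : ι → ℝ := fun i => thickenedIndicator hδ (E i) y
  calc
    ∑' i, |thickenedPartition hδ E i x - thickenedPartition hδ E i y|
      ≤ 2 * (∑' i, |u i - v i|) / ∑' i, u i :=
      tsum_abs_div_tsum_sub_div_tsum_le (summable_thickenedIndicator hδ hmult x)
        (summable_thickenedIndicator hδ hmult y) (fun _ => NNReal.coe_nonneg _)
        (one_pos.trans_le hx) (one_pos.trans_le hy)
    _ ≤ 2 * ∑' i, |u i - v i| :=
      div_le_self (mul_nonneg two_pos.le (tsum_nonneg fun _ => abs_nonneg _)) hx
    _ ≤ 2 * (2 * m * (R / δ)) := by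
      gcongr
      exact tsum_abs_sub_le hGcard hHcard hG hH
        (fun i => abs_thickenedIndicator_sub_le hδ (E i) hR h) (by positivity)
    _ = 4 * m * R / δ := by ring

end ThickenedPartition

section Equivalence

variable {X : Type u} [PseudoEMetricSpace X] {n : ℕ}

open Metric

theorem HasPartitionsOfUnity.hasDisjointDecompositions (h : HasPartitionsOfUnity X n) :
    HasDisjointDecompositions X n := by
  intro R hR
  obtain ⟨δ, hδ, hδn⟩ : ∃ δ : ℝ, 0 < δ ∧ ((n + 1 : ℕ) : ℝ) * ((n + 1 : ℕ) * δ) < 1 := by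
    refine ⟨1 / (2 * (n + 1 : ℕ) ^ 2), by positivity, ?_⟩
    field_simp
    norm_num
  obtain ⟨S, φ, hφ, hsum, hmult, hcont, D, hD, hdiam⟩ := h R δ hR hδ
  have hcoord (x y : X) (hxy : edist x y < ENNReal.ofReal R) (s : S) : |φ s x - φ s y| ≤ δ :=
    (((hsum x).summable.sub (hsum y).summable).abs.le_tsum s fun _ _ => abs_nonneg _).trans
      (hcont x y hxy.le)
  refine ⟨fun k => gapSet φ δ '' {σ | σ.card = k + 1}, D, hD, ?_,
    fun k => isDisjointFamily_gapSet hcoord (k + 1), ?_⟩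
  · refine Set.eq_univ_of_forall fun x => ?_
    obtain ⟨σ, hσ, hσcard, hxσ⟩ :=
      exists_mem_gapSet hδ.le hδn (fun s => (hφ s x).1) (hsum x) hmult
    have hσpos := hσ.card_pos
    exact Set.mem_iUnion.2 ⟨⟨σ.card - 1, by omega⟩, gapSet φ δ σ,
      ⟨σ, (Nat.sub_add_cancel hσpos).symm, rfl⟩, hxσ⟩
  · rintro k _ ⟨σ, hσ, rfl⟩
    obtain ⟨s, hs⟩ : σ.Nonempty := Finset.card_pos.1 (hσ ▸ Nat.succ_pos k)
    exact (ediam_mono fun x hx => hx.1 s hs).trans (hdiam s)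

theorem HasDisjointDecompositions.hasLebesgueCovers (h : HasDisjointDecompositions X n) :
    HasLebesgueCovers X n := by
  intro R hR
  -- Open `2R`-thickenings contain closed `R`-balls and are disjoint for a `4R`-disjoint family.
  obtain ⟨F, D, hD, hcover, hdisj, hdiam⟩ := h (2 * (2 * R)) (by positivity)
  have hdisj' (k) : (F k).PairwiseDisjoint (thickening (2 * R)) := by
    refine pairwiseDisjoint_thickening ?_
    rw [← ENNReal.ofReal_ofNat 2, ← ENNReal.ofReal_mul zero_le_two]
    exact hdisj k
  have hball (x : X) : ∃ V ∈ ⋃ k, thickening (2 * R) '' F k,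
      closedEBall x (ENNReal.ofReal R) ⊆ V := by
    obtain ⟨k, A, hA, hxA⟩ := Set.mem_iUnion.1 (hcover ▸ Set.mem_univ x)
    refine ⟨_, Set.mem_iUnion.2 ⟨k, A, hA, rfl⟩, fun y hy => ?_⟩
    refine (mem_thickening_iff_exists_edist_lt A y).2 ⟨x, hxA, lt_of_le_of_lt hy ?_⟩
    exact (ENNReal.ofReal_lt_ofReal_iff (by positivity)).2 (by linarith)
  refine ⟨⋃ k, thickening (2 * R) '' F k, D + 2 * (2 * R), by positivity, ?_, hball, fun x => ?_,
    fun V hV => ?_⟩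
  · refine Set.eq_univ_of_forall fun x => ?_
    obtain ⟨V, hV, hxV⟩ := hball x
    exact ⟨V, hV, hxV mem_closedEBall_self⟩
  · obtain ⟨G, hGcard, hG⟩ := exists_finset_of_pairwiseDisjoint hdisj' x
    refine ⟨G, by simpa using hGcard, fun V hV hxV => ?_⟩
    obtain ⟨k, A, hA, rfl⟩ := Set.mem_iUnion.1 hV
    exact hG k A hA hxV
  · obtain ⟨k, A, hA, rfl⟩ := Set.mem_iUnion.1 hV
    exact ediam_thickening_le_ofReal (by positivity) hD.le (hdiam k A hA)

theorem HasLebesgueCovers.hasPartitionsOfUnity (h : HasLebesgueCovers X n) :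
    HasPartitionsOfUnity X n := by
  intro R ε hR hε
  obtain ⟨δ, hδ, hδε⟩ : ∃ δ : ℝ, 0 < δ ∧ 4 * (n + 1 : ℕ) * R / δ = ε :=
    ⟨4 * (n + 1 : ℕ) * R / ε, by positivity, div_div_cancel₀ (by positivity)⟩
  obtain ⟨𝒱, D, hD, -, hball, hmult, hdiam⟩ := h δ hδ
  let E (V : 𝒱) : Set X := {x | closedEBall x (ENNReal.ofReal δ) ⊆ V.1}
  have hcover (x : X) : ∃ V, x ∈ E V := by
    obtain ⟨V, hV, hxV⟩ := hball x
    exact ⟨⟨V, hV⟩, hxV⟩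
  have hEV (V : 𝒱) : thickening δ (E V) ⊆ V.1 := thickening_setOf_closedEBall_subset δ V.1
  have hmultE : HasMultiplicityLE (fun V => thickening δ (E V)) (n + 1) :=
    (hasMultiplicityLE_coe hmult).mono hEV
  have hstrata := setOf_thickenedPartition_pos_subset hδ (E := E)
  have hsum := hasSum_thickenedPartition hδ hmultE hcover
  have hnonneg := thickenedPartition_nonneg hδ (E := E)
  refine ⟨𝒱, thickenedPartition hδ E, fun V x => ⟨hnonneg V x, ?_⟩, hsum, hmultE.mono hstrata,
    fun x y hxy => ?_, D, hD, fun V => ?_⟩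
  · exact le_hasSum (hsum x) V fun W _ => hnonneg W x
  · exact (tsum_abs_thickenedPartition_sub_le hδ hmultE hcover hR.le hxy).trans_eq hδε
  · exact (ediam_mono ((hstrata V).trans (hEV V))).trans (hdiam V V.2)

end Equivalence

theorem stmt14_general (X : Type u) [PseudoEMetricSpace X] (n : ℕ) :
    [HasPartitionsOfUnity X n, HasDisjointDecompositions X n, HasLebesgueCovers X n].TFAE := by
  tfae_have 1 → 2 := HasPartitionsOfUnity.hasDisjointDecompositions
  tfae_have 2 → 3 := HasDisjointDecompositions.hasLebesgueCovers
  tfae_have 3 → 1 := HasLebesgueCovers.hasPartitionsOfUnity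
  tfae_finish

/-- For an ∞-pseudo-metric space `X` and `n ≥ 0`, the following are
equivalent: (1) for every `R, ε > 0` there is an `(ε,R)`-continuous partition of unity of
dimension at most `n` with uniformly bounded strata; (2) for every `R > 0`, `X` is a union
of `n+1` sets each of which is a union of an `R`-disjoint uniformly bounded family;
(3) for every `R > 0`, `X` has a uniformly bounded cover of Lebesgue number at least `R`
and multiplicity at most `n+1`. -/
theorem stmt14 {X : Type} [PseudoEMetricSpace X] (n : ℕ) :
    ((∀ R ε : ℝ, 0 < R → 0 < ε → ∃ (S : Type) (φ : S → X → ℝ),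
        (∀ s x, 0 ≤ φ s x ∧ φ s x ≤ 1) ∧
        (∀ x, HasSum (fun s => φ s x) 1) ∧
        (∀ x : X, ∃ F : Finset S, F.card ≤ n + 1 ∧ ∀ s, 0 < φ s x → s ∈ F) ∧
        (∀ x y : X, edist x y ≤ ENNReal.ofReal R → (∑' s, |φ s x - φ s y|) ≤ ε) ∧
        (∃ D : ℝ, 0 < D ∧ ∀ s, EMetric.diam {x | 0 < φ s x} ≤ ENNReal.ofReal D)) ↔
      (∀ R : ℝ, 0 < R → ∃ (F : Fin (n + 1) → Set (Set X)) (D : ℝ), 0 < D ∧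
        (⋃ k, ⋃₀ F k) = Set.univ ∧
        (∀ k, ∀ A ∈ F k, ∀ B ∈ F k, A ≠ B → ∀ x ∈ A, ∀ y ∈ B,
          ENNReal.ofReal R ≤ edist x y) ∧
        (∀ k, ∀ A ∈ F k, EMetric.diam A ≤ ENNReal.ofReal D))) ∧
    ((∀ R : ℝ, 0 < R → ∃ (F : Fin (n + 1) → Set (Set X)) (D : ℝ), 0 < D ∧
        (⋃ k, ⋃₀ F k) = Set.univ ∧
        (∀ k, ∀ A ∈ F k, ∀ B ∈ F k, A ≠ B → ∀ x ∈ A, ∀ y ∈ B,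
          ENNReal.ofReal R ≤ edist x y) ∧
        (∀ k, ∀ A ∈ F k, EMetric.diam A ≤ ENNReal.ofReal D)) ↔
      (∀ R : ℝ, 0 < R → ∃ (𝒱 : Set (Set X)) (D : ℝ), 0 < D ∧
        ⋃₀ 𝒱 = Set.univ ∧
        (∀ x : X, ∃ V ∈ 𝒱, EMetric.closedBall x (ENNReal.ofReal R) ⊆ V) ∧
        (∀ x : X, ∃ G : Finset (Set X), G.card ≤ n + 1 ∧ ∀ V ∈ 𝒱, x ∈ V → V ∈ G) ∧
        (∀ V ∈ 𝒱, EMetric.diam V ≤ ENNReal.ofReal D))) :=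
  ⟨(stmt14_general X n).out 0 1, (stmt14_general X n).out 1 2⟩
end

section
/- Let {X_s}_{s∈S} be a family of ∞-pseudo-metric spaces, let r > 0, and for each s ∈ S let A_s ⊆ X_s be nonempty. Let x_s ∈ B(A_s,r) (the set of points of X_s at distance at most r from A_s) and choose y_s ∈ A_s with d(x_s, y_s) ≤ r. Then the function f : ⋁_{s∈S}(A_s, y_s) → ⋁_{s∈S}(B(A_s,r), x_s) that is the identity on A_s ∖ {y_s} in each component and sends each basepoint (s, y_s) to (s, x_s) is a coarse equivalence. -/
open scoped ENNReal

open Classical in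
/-- The wedge `∞`-pseudo-distance on the disjoint union of pointed `∞`-pseudo-metric
spaces `(Y_s, p_s)`: within one component it is the original distance, across components
it is `d(a, p_s) + d(p_t, b)`. -/
noncomputable def wedgeEDist {S : Type} {Y : S → Type} [∀ s, PseudoEMetricSpace (Y s)]
    (p : ∀ s, Y s) : (Σ s, Y s) → (Σ s, Y s) → ℝ≥0∞
  | ⟨s, a⟩, ⟨t, b⟩ =>
    if h : s = t then edist a (h.symm ▸ b) else edist a (p s) + edist (p t) b

/-- A coarse equivalence with respect to given `∞`-pseudo-distances: bornologous,
effectively proper, and with coarsely dense image. -/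
def CoarseEquivE {A B : Type} (dA : A → A → ℝ≥0∞) (dB : B → B → ℝ≥0∞) (f : A → B) : Prop :=
  (∀ R : ℝ, 0 < R → ∃ S' : ℝ, 0 < S' ∧ ∀ a a',
    dA a a' ≤ ENNReal.ofReal R → dB (f a) (f a') ≤ ENNReal.ofReal S') ∧
  (∀ S' : ℝ, 0 < S' → ∃ R : ℝ, 0 < R ∧ ∀ a a',
    dB (f a) (f a') ≤ ENNReal.ofReal S' → dA a a' ≤ ENNReal.ofReal R) ∧
  (∃ C : ℝ, 0 ≤ C ∧ ∀ b, ∃ a, dB (f a) b ≤ ENNReal.ofReal C)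

/-- The `r`-ball `B(A,r)` around a subset `A`: all points at distance at most `r` from
some point of `A`. -/
def BallAround {X : Type} [PseudoEMetricSpace X] (A : Set X) (r : ℝ) : Set X :=
  {z | ∃ a ∈ A, edist z a ≤ ENNReal.ofReal r}

/-!
The map is a wedge of pointed maps, each of which moves points by at most `r` inside `X s` and hence
changes distances by at most `2r`. A distance across two components of a wedge is the sum of two
distances to basepoints, so on the whole wedge the map changes distances by at most `4r`. Its
image is coarsely dense because every point of `B(A s, r)` is within `r` of `A s`, hence within `2r`
of the image of `A s`.
-/

/-- A map that changes distances by at most `c` and has `c`-dense image; for `c < ∞` it is also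
called a `(1, c)`-quasi-isometry. As for `CoarseEquivE`, the distances are explicit functions, so
that the notion applies to both `edist` and `wedgeEDist`. -/
structure IsRoughIsometry {A B : Type*} (dA : A → A → ℝ≥0∞) (dB : B → B → ℝ≥0∞) (c : ℝ≥0∞)
    (f : A → B) : Prop where
  map_le_add : ∀ a a', dB (f a) (f a') ≤ dA a a' + c
  le_map_add : ∀ a a', dA a a' ≤ dB (f a) (f a') + c
  exists_map_le : ∀ b, ∃ a, dB (f a) b ≤ c

theorem IsRoughIsometry.coarseEquivE {A B : Type} {dA : A → A → ℝ≥0∞} {dB : B → B → ℝ≥0∞}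
    {c : ℝ≥0∞} {f : A → B} (hf : IsRoughIsometry dA dB c f) (hc : c ≠ ∞) :
    CoarseEquivE dA dB f := by
  lift c to NNReal using hc
  have ofReal_add_coe : ∀ R : ℝ, 0 < R → ENNReal.ofReal (R + c) = ENNReal.ofReal R + c :=
    fun R hR => by rw [ENNReal.ofReal_add hR.le c.coe_nonneg, ENNReal.ofReal_coe_nnreal]
  refine ⟨fun R hR => ⟨R + c, by positivity, fun a a' h => ?_⟩,
    fun R hR => ⟨R + c, by positivity, fun a a' h => ?_⟩, c, c.coe_nonneg, fun b => ?_⟩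
  · rw [ofReal_add_coe R hR]
    exact (hf.map_le_add a a').trans (by gcongr)
  · rw [ofReal_add_coe R hR]
    exact (hf.le_map_add a a').trans (by gcongr)
  · simpa only [ENNReal.ofReal_coe_nnreal] using hf.exists_map_le b

section PseudoEMetricSpace

variable {X : Type*} [PseudoEMetricSpace X]

theorem edist_le_edist_add_two_mul {a a' b b' : X} {c : ℝ≥0∞} (ha : edist a a' ≤ c)
    (hb : edist b b' ≤ c) : edist a b ≤ edist a' b' + 2 * c :=
  calc edist a b ≤ edist a a' + edist a' b' + edist b' b := edist_triangle4 a a' b' b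
    _ ≤ c + edist a' b' + c := by rw [edist_comm b' b]; gcongr
    _ = edist a' b' + 2 * c := by ring

theorem IsRoughIsometry.of_edist_le {A B : Set X} {c : ℝ≥0∞} {g : A → B}
    (hg : ∀ a, edist (g a : X) a ≤ c) (hB : ∀ b ∈ B, ∃ a ∈ A, edist b a ≤ c) :
    IsRoughIsometry edist edist (2 * c) g where
  map_le_add a a' := edist_le_edist_add_two_mul (hg a) (hg a')
  le_map_add a a' := by
    have hg' (a : A) : edist (a : X) (g a) ≤ c := edist_comm (a : X) _ ▸ hg a
    exact edist_le_edist_add_two_mul (hg' a) (hg' a')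
  exists_map_le := by
    rintro ⟨b, hb⟩
    obtain ⟨a, ha, hba⟩ := hB b hb
    refine ⟨⟨a, ha⟩, ?_⟩
    calc edist (g ⟨a, ha⟩ : X) b ≤ edist (g ⟨a, ha⟩ : X) a + edist a b := edist_triangle _ _ _
      _ ≤ c + c := add_le_add (hg ⟨a, ha⟩) (edist_comm a b ▸ hba)
      _ = 2 * c := (two_mul c).symm

end PseudoEMetricSpace

section Wedge

variable {S : Type} {Y Z : S → Type} [∀ s, PseudoEMetricSpace (Y s)]
  [∀ s, PseudoEMetricSpace (Z s)] {p : ∀ s, Y s} {q : ∀ s, Z s}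

theorem wedgeEDist_mk_same (s : S) (a b : Y s) : wedgeEDist p ⟨s, a⟩ ⟨s, b⟩ = edist a b := by
  simp only [wedgeEDist, dite_true]

theorem wedgeEDist_mk_of_ne {s t : S} (hst : s ≠ t) (a : Y s) (b : Y t) :
    wedgeEDist p ⟨s, a⟩ ⟨t, b⟩ = edist a (p s) + edist (p t) b := by
  simp only [wedgeEDist, dif_neg hst]

theorem wedgeEDist_map_le_map_add {W : S → Type*} {w : ∀ s, W s} {f : ∀ s, W s → Y s}
    {g : ∀ s, W s → Z s} {c : ℝ≥0∞} (hf : ∀ s, f s (w s) = p s) (hg : ∀ s, g s (w s) = q s)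
    (hfg : ∀ s a b, edist (f s a) (f s b) ≤ edist (g s a) (g s b) + c) (u v : Σ s, W s) :
    wedgeEDist p (u.map id f) (v.map id f) ≤ wedgeEDist q (u.map id g) (v.map id g) + 2 * c := by
  obtain ⟨s, a⟩ := u
  obtain ⟨t, b⟩ := v
  simp only [Sigma.map, id]
  obtain rfl | hst := eq_or_ne s t
  · rw [wedgeEDist_mk_same, wedgeEDist_mk_same, two_mul, ← add_assoc]
    exact (hfg s a b).trans le_self_add
  · rw [wedgeEDist_mk_of_ne hst, wedgeEDist_mk_of_ne hst, ← hf, ← hf, ← hg, ← hg]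
    calc edist (f s a) (f s (w s)) + edist (f t (w t)) (f t b)
        ≤ (edist (g s a) (g s (w s)) + c) + (edist (g t (w t)) (g t b) + c) :=
          add_le_add (hfg s _ _) (hfg t _ _)
      _ = edist (g s a) (g s (w s)) + edist (g t (w t)) (g t b) + 2 * c := by ring

theorem IsRoughIsometry.sigma_map {g : ∀ s, Y s → Z s} {c : ℝ≥0∞}
    (hg : ∀ s, IsRoughIsometry edist edist c (g s)) (hpq : ∀ s, g s (p s) = q s) :
    IsRoughIsometry (wedgeEDist p) (wedgeEDist q) (2 * c) (Sigma.map id g) where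
  map_le_add u v :=
    wedgeEDist_map_le_map_add (f := g) (g := fun _ => id) hpq (fun _ => rfl)
      (fun s => (hg s).map_le_add) u v
  le_map_add u v :=
    wedgeEDist_map_le_map_add (f := fun _ => id) (g := g) (fun _ => rfl) hpq
      (fun s => (hg s).le_map_add) u v
  exists_map_le := by
    rintro ⟨s, b⟩
    obtain ⟨a, hab⟩ := (hg s).exists_map_le b
    refine ⟨⟨s, a⟩, ?_⟩
    calc wedgeEDist q ⟨s, g s a⟩ ⟨s, b⟩ = edist (g s a) b := wedgeEDist_mk_same s _ _
      _ ≤ c := hab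
      _ ≤ 2 * c := by rw [two_mul]; exact le_self_add

end Wedge

open Classical in
/-- Given nonempty `A_s ⊆ X_s`, `x_s ∈ B(A_s,r)` and `y_s ∈ A_s` with
`d(x_s,y_s) ≤ r`, the map `⋁_s (A_s, y_s) → ⋁_s (B(A_s,r), x_s)` which is the identity on
`A_s ∖ {y_s}` and sends the basepoint `y_s` to `x_s` is a coarse equivalence. -/
theorem stmt15 {S : Type} {X : S → Type} [∀ s, PseudoEMetricSpace (X s)]
    (r : ℝ) (hr : 0 < r) (A : ∀ s, Set (X s)) (hA : ∀ s, (A s).Nonempty)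
    (x y : ∀ s, X s)
    (hy : ∀ s, y s ∈ A s)
    (hxy : ∀ s, edist (x s) (y s) ≤ ENNReal.ofReal r)
    (hxB : ∀ s, x s ∈ BallAround (A s) r)
    (hAB : ∀ s, A s ⊆ BallAround (A s) r) :
    CoarseEquivE
      (wedgeEDist (Y := fun s => ↥(A s)) (fun s => ⟨y s, hy s⟩))
      (wedgeEDist (Y := fun s => ↥(BallAround (A s) r)) (fun s => ⟨x s, hxB s⟩))
      (fun u => ⟨u.1, if (u.2 : X u.1) = y u.1 then ⟨x u.1, hxB u.1⟩
                      else ⟨(u.2 : X u.1), hAB u.1 u.2.2⟩⟩) := by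
  let g : ∀ s, A s → BallAround (A s) r := fun s a =>
    if (a : X s) = y s then ⟨x s, hxB s⟩ else ⟨(a : X s), hAB s a.2⟩
  have g_basepoint : ∀ s, g s ⟨y s, hy s⟩ = ⟨x s, hxB s⟩ := fun s => if_pos rfl
  have edist_g_le : ∀ s (a : A s), edist (g s a : X s) a ≤ ENNReal.ofReal r := by
    intro s a
    by_cases h : (a : X s) = y s
    · simpa only [g, h, if_true] using hxy s
    · simp only [g, h, if_false, edist_self, zero_le]
  have g_rough : ∀ s, IsRoughIsometry edist edist (2 * ENNReal.ofReal r) (g s) := fun s =>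
    .of_edist_le (edist_g_le s) fun _ hb => hb
  exact (IsRoughIsometry.sigma_map g_rough g_basepoint).coarseEquivE (by finiteness)
end
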